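/- For each k ≥ 1, Δ_k^{(k−1)} = (−1)^{k−1}; consequently, for each l ≥ 1, the l×l matrix B with entries B_{ij} = Δ_i^{(l−j)} satisfies B_{ij} = 0 whenever i + j > l + 1, B_{k, l+1−k} = (−1)^{k−1}, and det B = 1. -/

import Mathlib

open Polynomial Matrix Finset

noncomputable section

variable {K L : Type*} [Field K] [Field L]

/-- The orthogonal-polynomial sequence: `φ₀ = 1`, `φ₁ = z - a 0`,
`φ_{i+1} = (z - a i)·φ_i - b i·φ_{i-1}` (so `φ_{-1} = 0`). -/
def phi (a b : ℤ → K) : ℕ → Polynomial K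
  | 0 => 1
  | 1 => Polynomial.X - Polynomial.C (a 0)
  | (i+2) => (Polynomial.X - Polynomial.C (a (i+1))) * phi a b (i+1)
      - Polynomial.C (b (i+1)) * phi a b i

/-- `φ` with integer index, `0` for negative index. -/
def phiZ (a b : ℤ → K) (m : ℤ) : Polynomial K :=
  if m < 0 then 0 else phi a b m.toNat

/-- Generalized Schur polynomial `S_λ(y₁,…,y_m|a,b)
  = det(φ_{λ_j+m-j}(y_i)) / ∏_{i<j}(y_i - y_j)` (indices here 0-based). -/
def genS (a b : ℤ → K) (c : K →+* L) {m : ℕ} (y : Fin m → L) (lam : Fin m → ℕ) : L :=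
  Matrix.det (Matrix.of fun i j : Fin m =>
      (phi a b (lam j + (m - 1 - (j : ℕ)))).eval₂ c (y i)) /
    ∏ i : Fin m, ∏ j ∈ Finset.Ioi i, (y i - y j)

/-- `h_i = S_{(i)}` for `i ≥ 0`, and `h_i = 0` for `i < 0`. -/
def genh (a b : ℤ → K) (c : K →+* L) {m : ℕ} (y : Fin m → L) (i : ℤ) : L :=
  if i < 0 then 0 else genS a b c y (fun j => if (j : ℕ) = 0 then i.toNat else 0)

/-- `h_i^{(0)} = h_i`, `h_i^{(r+1)} = h_{i+1}^{(r)} + a(i+m-1)h_i^{(r)} + b(i+m-1)h_{i-1}^{(r)}`. -/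
def genhr (a b : ℤ → K) (c : K →+* L) {m : ℕ} (y : Fin m → L) : ℕ → ℤ → L
  | 0, i => genh a b c y i
  | (r+1), i => genhr a b c y r (i+1) + c (a (i + m - 1)) * genhr a b c y r i
      + c (b (i + m - 1)) * genhr a b c y r (i-1)

/-- The field `F = K(x₁,…,x_n)`. -/
abbrev Fn (K : Type*) [Field K] (n : ℕ) := FractionRing (MvPolynomial (Fin n) K)

/-- The embedding `K → K(x₁,…,x_n)`. -/
def cK (K : Type*) [Field K] (n : ℕ) : K →+* Fn K n :=
  (algebraMap (MvPolynomial (Fin n) K) (Fn K n)).comp MvPolynomial.C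

/-- The variables `x₁,…,x_n` as elements of `K(x₁,…,x_n)`. -/
def xv (K : Type*) [Field K] (n : ℕ) (i : Fin n) : Fn K n :=
  algebraMap (MvPolynomial (Fin n) K) (Fn K n) (MvPolynomial.X i)

/-- The `j × (j+1)` matrix `H^{(j)}` with entries `(H^{(j)})_{i,c} = h^{(c)}_{1-i}`
(rows 0-indexed here, so row `i` holds `h^{(c)}_{-i}`). -/
def Hmat (a b : ℤ → K) (c : K →+* L) {mv : ℕ} (y : Fin mv → L) (j : ℕ) :
    Matrix (Fin j) (Fin (j + 1)) L :=
  Matrix.of fun i cc => genhr a b c y (cc : ℕ) (-(i : ℤ))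

/-- `Δ_{m+1}^{(j)}` (0-indexed in `m`): `(-1)^m` times the determinant of `H^{(j)}`
with its `(m+1)`-st column removed; `0` when `m + 1 > j + 1`. -/
def DeltaMinor (a b : ℤ → K) (c : K →+* L) {mv : ℕ} (y : Fin mv → L) (j m : ℕ) : L :=
  if hm : m < j + 1 then
    (-1) ^ m * Matrix.det (Matrix.of fun i cc : Fin j =>
      Hmat a b c y j i (Fin.succAbove ⟨m, hm⟩ cc))
  else 0

/-!
Put `d = i + r`. Each step of the recursion for `h_i^{(r)}` expresses an entry with parameter `d`
through entries with parameters `d`, `d - 1` and `d - 2`, the first with coefficient `1`. Since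
`h_i = 0` for `i < 0`, all entries with `d < 0` vanish, and those with `d = 0` all equal `h_0 = 1`
(a ratio of two Vandermonde determinants). So `H^{(j)}` without its last column is upper
unitriangular, which gives `Δ_{j+1}^{(j)} = (-1)^j`. As `Δ_m^{(j)} = 0` for `m > j + 1`, the
matrix `B` is anti-triangular; the signs `(-1)^{k-1}` on its anti-diagonal multiply to the sign of
the order-reversing permutation, so that `det B = 1`.
-/

section Determinants

variable {R : Type*} [CommRing R] {n : ℕ}

theorem sign_finRevPerm (n : ℕ) :
    Equiv.Perm.sign (Fin.revPerm : Equiv.Perm (Fin n)) = ∏ j : Fin n, (-1) ^ (j : ℕ) := by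
  rw [Equiv.Perm.sign_eq_prod_prod_Iio]
  refine Finset.prod_congr rfl fun j _ => ?_
  have inversion : ∀ i ∈ Finset.Iio j,
      (if Fin.revPerm i < Fin.revPerm j then 1 else -1 : ℤˣ) = -1 := fun i hi =>
    if_neg (by simpa using (Finset.mem_Iio.1 hi).le)
  rw [Finset.prod_congr rfl inversion, Finset.prod_const, Fin.card_Iio]

theorem det_of_antitriangular {M : Matrix (Fin n) (Fin n) R}
    (hM : ∀ i j : Fin n, j.rev < i → M i j = 0) :
    M.det = ∏ i : Fin n, (-1) ^ (i : ℕ) * M i i.rev := by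
  have htri : (M.submatrix id Fin.revPerm).IsUpperTriangular := fun i j hji =>
    hM i j.rev (by rwa [Fin.rev_rev])
  calc M.det = ((M.submatrix id Fin.revPerm).submatrix id Fin.revPerm).det := by
        congr 1
        ext i j
        simp
    _ = (∏ i : Fin n, (-1) ^ (i : ℕ)) * ∏ i : Fin n, M i i.rev := by
        rw [Matrix.det_permute', Matrix.det_of_isUpperTriangular htri, sign_finRevPerm]
        simp
    _ = ∏ i : Fin n, (-1) ^ (i : ℕ) * M i i.rev := Finset.prod_mul_distrib.symm

theorem det_eval_rev_eq_prod_sub (v : Fin n → R) {p : Fin n → R[X]}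
    (hp : ∀ j : Fin n, IsMonicOfDegree (p j) j) :
    (Matrix.of fun i j : Fin n => (p j.rev).eval (v i)).det =
      ∏ i : Fin n, ∏ j ∈ Finset.Ioi i, (v i - v j) := by
  have hvandermonde : (Matrix.vandermonde v).submatrix id Fin.revPerm =
      Matrix.projVandermonde 1 v := by
    ext i j
    simp [Matrix.projVandermonde_apply]
  calc (Matrix.of fun i j : Fin n => (p j.rev).eval (v i)).det
      = ((Matrix.of fun i j : Fin n => (p j).eval (v i)).submatrix id Fin.revPerm).det := rfl
    _ = ((Matrix.vandermonde v).submatrix id Fin.revPerm).det := by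
        rw [Matrix.det_permute', Matrix.det_permute',
          Matrix.det_eval_matrixOfPolynomials_eq_det_vandermonde v p
            (fun j => (hp j).natDegree_eq) fun j => (hp j).monic]
    _ = ∏ i : Fin n, ∏ j ∈ Finset.Ioi i, (v i - v j) := by
        rw [hvandermonde, Matrix.det_projVandermonde]
        simp

end Determinants

theorem isMonicOfDegree_phi (a b : ℤ → K) (i : ℕ) : IsMonicOfDegree (phi a b i) i := by
  induction i using Nat.twoStepInduction with
  | zero => exact isMonicOfDegree_zero_iff.2 rfl
  | one => exact isMonicOfDegree_X_sub_one (a 0)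
  | more i ih₀ ih₁ =>
    have hlead : IsMonicOfDegree ((X - C (a (i + 1))) * phi a b (i + 1)) (i + 2) := by
      simpa [add_comm, add_left_comm] using (isMonicOfDegree_X_sub_one (a (i + 1))).mul ih₁
    have htail : (C (b (i + 1)) * phi a b i).natDegree < i + 2 := by
      have := natDegree_C_mul_le (b (i + 1)) (phi a b i)
      have := ih₀.natDegree_eq
      omega
    exact hlead.sub htail

section Schur

variable (a b : ℤ → K) (c : K →+* L) {m : ℕ} {y : Fin m → L}

theorem genS_zero (hy : Function.Injective y) : genS a b c y 0 = 1 := by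
  have hden : ∏ i : Fin m, ∏ j ∈ Finset.Ioi i, (y i - y j) ≠ 0 :=
    Finset.prod_ne_zero_iff.2 fun i _ => Finset.prod_ne_zero_iff.2 fun j hj =>
      sub_ne_zero.2 (hy.ne (Finset.mem_Ioi.1 hj).ne)
  have hmonic : ∀ j : Fin m, IsMonicOfDegree ((phi a b j).map c) j := fun j =>
    ⟨by rw [natDegree_map, (isMonicOfDegree_phi a b j).natDegree_eq],
      (isMonicOfDegree_phi a b j).monic.map c⟩
  rw [genS, div_eq_one_iff_eq hden, ← det_eval_rev_eq_prod_sub y hmonic]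
  congr 1
  ext i j
  simp [eval_map, Fin.val_rev, Nat.sub_sub, add_comm]

theorem genh_zero (hy : Function.Injective y) : genh a b c y 0 = 1 := by
  simp [genh, ← Pi.zero_def, genS_zero a b c hy]

variable (y) in
theorem genhr_eq_zero_of_add_neg {r : ℕ} {i : ℤ} (hi : i + r < 0) : genhr a b c y r i = 0 := by
  induction r generalizing i with
  | zero => exact if_pos (by simpa using hi)
  | succ r ih =>
    push_cast at hi
    rw [genhr, ih (by omega), ih (by omega), ih (by omega)]
    simp

theorem genhr_neg_self (hy : Function.Injective y) (r : ℕ) : genhr a b c y r (-r) = 1 := by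
  induction r with
  | zero => simpa [genhr] using genh_zero a b c hy
  | succ r ih =>
    have hr : -((r + 1 : ℕ) : ℤ) + 1 = -r := by
      push_cast
      ring
    rw [genhr, hr, ih, genhr_eq_zero_of_add_neg a b c y (by omega),
      genhr_eq_zero_of_add_neg a b c y (by omega)]
    simp

variable (y) in
theorem isUpperTriangular_Hmat_castSucc (j : ℕ) :
    ((Hmat a b c y j).submatrix id Fin.castSucc).IsUpperTriangular := by
  intro i k hki
  have hlt : (k : ℕ) < i := hki
  exact genhr_eq_zero_of_add_neg a b c y (r := k) (i := -i) (by omega)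

variable (y) in
theorem DeltaMinor_eq_zero_of_lt {j i : ℕ} (h : j < i) : DeltaMinor a b c y j i = 0 :=
  dif_neg (by omega)

theorem DeltaMinor_self (hy : Function.Injective y) (j : ℕ) :
    DeltaMinor a b c y j j = (-1) ^ j := by
  have hdet : ((Hmat a b c y j).submatrix id Fin.castSucc).det = 1 := by
    rw [Matrix.det_of_isUpperTriangular (isUpperTriangular_Hmat_castSucc a b c y j)]
    exact Finset.prod_eq_one fun i _ => genhr_neg_self a b c hy i
  have hlast : (⟨j, j.lt_succ_self⟩ : Fin (j + 1)) = Fin.last j := rfl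
  rw [DeltaMinor, dif_pos j.lt_succ_self, hlast, Fin.succAbove_last]
  exact (congrArg _ hdet).trans (mul_one _)

theorem det_DeltaMinor (hy : Function.Injective y) (l : ℕ) :
    (Matrix.of fun i j : Fin l => DeltaMinor a b c y (l - 1 - (j : ℕ)) (i : ℕ)).det = 1 := by
  rw [det_of_antitriangular]
  · refine Finset.prod_eq_one fun i _ => ?_
    have hrev : l - 1 - (i.rev : ℕ) = i := by
      rw [Fin.val_rev]
      omega
    rw [Matrix.of_apply, hrev, DeltaMinor_self a b c hy, ← mul_pow]
    simp
  · intro i j hji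
    rw [Fin.lt_def, Fin.val_rev] at hji
    exact DeltaMinor_eq_zero_of_lt a b c y (by omega)

theorem DeltaMinor_antitriangular_general (hy : Function.Injective y) :
    (∀ k : ℕ, DeltaMinor a b c y k k = (-1) ^ k) ∧
    ∀ l : ℕ,
      (∀ i j : Fin l, l + 1 < ((i : ℕ) + 1) + ((j : ℕ) + 1) →
        DeltaMinor a b c y (l - 1 - (j : ℕ)) (i : ℕ) = 0) ∧
      (∀ k : Fin l, DeltaMinor a b c y (l - 1 - (l - 1 - (k : ℕ))) (k : ℕ) = (-1) ^ (k : ℕ)) ∧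
      (Matrix.of fun i j : Fin l => DeltaMinor a b c y (l - 1 - (j : ℕ)) (i : ℕ)).det = 1 := by
  refine ⟨DeltaMinor_self a b c hy, fun l => ⟨fun i j hij => ?_, fun k => ?_, ?_⟩⟩
  · exact DeltaMinor_eq_zero_of_lt a b c y (by omega)
  · rw [Nat.sub_sub_self (by omega), DeltaMinor_self a b c hy]
  · exact det_DeltaMinor a b c hy l

end Schur

theorem xv_injective (K : Type*) [Field K] (n : ℕ) : Function.Injective (xv K n) :=
  (IsFractionRing.injective (MvPolynomial (Fin n) K) (Fn K n)).comp MvPolynomial.X_injective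

/-- `Δ_k^{(k-1)} = (-1)^{k-1}` for `k ≥ 1`; consequently for each `l ≥ 1` the `l×l` matrix
`B` with `B_{ij} = Δ_i^{(l-j)}` is anti-triangular with anti-diagonal entries `(-1)^{k-1}`
and `det B = 1`. (All indices 0-based in the formalization.) -/
theorem DeltaMinor_antitriangular (K : Type*) [Field K] (a b : ℤ → K) (n : ℕ) (hn : 1 ≤ n) :
    (∀ k : ℕ, 1 ≤ k →
      DeltaMinor a b (cK K n) (xv K n) (k - 1) (k - 1) = (-1) ^ (k - 1)) ∧
    ∀ l : ℕ, 1 ≤ l →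
      (∀ i j : Fin l, l + 1 < ((i : ℕ) + 1) + ((j : ℕ) + 1) →
        DeltaMinor a b (cK K n) (xv K n) (l - 1 - (j : ℕ)) (i : ℕ) = 0) ∧
      (∀ k : Fin l,
        DeltaMinor a b (cK K n) (xv K n) (l - 1 - (l - 1 - (k : ℕ))) (k : ℕ)
          = (-1) ^ (k : ℕ)) ∧
      Matrix.det (Matrix.of fun i j : Fin l =>
        DeltaMinor a b (cK K n) (xv K n) (l - 1 - (j : ℕ)) (i : ℕ)) = 1 := by
  obtain ⟨hself, hB⟩ := DeltaMinor_antitriangular_general a b (cK K n) (xv_injective K n)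
  exact ⟨fun k _ => hself (k - 1), fun l _ => hB l⟩
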